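/- Let p be a parity for a class of free braids and let β be a braid word in that class such that all classical crossings of β are odd with respect to p and β admits no bigon reduction. Then every braid word β' equal to β in the free braid group FB_n contains a subword (obtained by deleting some letters) that is strongly equivalent to β. -/

import Mathlib

set_option maxHeartbeats 1000000

namespace OneTermBracket

/-- Letters (generators) of free braid words on `n` strands:
`zeta i` is a classical crossing, `tau i` a virtual crossing, `1 ≤ i+1 ≤ n-1`. -/
inductive Letter (n : ℕ) where
  | zeta (i : Fin (n-1))
  | tau  (i : Fin (n-1))
deriving DecidableEq

namespace Letter

def idx {n : ℕ} : Letter n → Fin (n-1)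
  | zeta i => i
  | tau i => i

def isZeta {n : ℕ} : Letter n → Bool
  | zeta _ => true
  | tau _ => false

end Letter

def lo {n : ℕ} (i : Fin (n-1)) : Fin n := ⟨i.1, by have := i.2; omega⟩
def hi {n : ℕ} (i : Fin (n-1)) : Fin n := ⟨i.1 + 1, by have := i.2; omega⟩

/-- The transposition `(i, i+1)` of `{1, …, n}`. -/
def sPerm {n : ℕ} (i : Fin (n-1)) : Equiv.Perm (Fin n) := Equiv.swap (lo i) (hi i)

/-- Each letter acts on positions as the transposition `(i, i+1)`. -/
def transOf {n : ℕ} (g : Letter n) : Equiv.Perm (Fin n) := sPerm g.idx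

/-- The permutation realized by the prefix of length `j` of a braid word,
mapping the top label of a strand to its position at level `j`. -/
def prefPerm {n : ℕ} (w : List (Letter n)) (j : ℕ) : Equiv.Perm (Fin n) :=
  (((w.take j).map transOf).reverse).prod

/-- The permutation `P(β)` of a braid word (top endpoint `k` goes to bottom endpoint `P k`). -/
def permOf {n : ℕ} (w : List (Letter n)) : Equiv.Perm (Fin n) :=
  ((w.map transOf).reverse).prod

/-- The unordered pair of (top labels of the) strands crossing at position `j` of `w`. -/
def strandsAt {n : ℕ} (w : List (Letter n)) (j : ℕ) : Option (Sym2 (Fin n)) :=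
  (w[j]?).map fun g => s((prefPerm w j)⁻¹ (lo g.idx), (prefPerm w j)⁻¹ (hi g.idx))

/-- Component-wise parity determined by a partition `{1,…,n} = N₁ ⊔ N₂` (encoded by
`c : Fin n → Bool`): a classical crossing is odd (`1`) iff its two strands lie in
different parts. Non-classical positions get `0`. -/
def cwParity {n : ℕ} (c : Fin n → Bool) (w : List (Letter n)) (j : ℕ) : ZMod 2 :=
  match w[j]? with
  | some (.zeta i) =>
      if c ((prefPerm w j)⁻¹ (lo i)) = c ((prefPerm w j)⁻¹ (hi i)) then 0 else 1
  | _ => 0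

/-- The defining relations of `F_n` and `FB_n` which do not involve
`ζ_i² = 1` or the classical third Reidemeister move ("strong" moves). -/
inductive RelStrong (n : ℕ) : List (Letter n) → List (Letter n) → Prop
  | tt (i : Fin (n-1)) : RelStrong n [.tau i, .tau i] []
  | virt (i : Fin (n-1)) : RelStrong n [.zeta i, .tau i] [.tau i, .zeta i]
  | far_zz (i j : Fin (n-1)) (h : 2 ≤ Nat.dist i j) :
      RelStrong n [.zeta i, .zeta j] [.zeta j, .zeta i]
  | far_zt (i j : Fin (n-1)) (h : 2 ≤ Nat.dist i j) :
      RelStrong n [.zeta i, .tau j] [.tau j, .zeta i]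
  | far_tt (i j : Fin (n-1)) (h : 2 ≤ Nat.dist i j) :
      RelStrong n [.tau i, .tau j] [.tau j, .tau i]
  | r3v (i j : Fin (n-1)) (h : (j:ℕ) = (i:ℕ) + 1) :
      RelStrong n [.tau i, .tau j, .tau i] [.tau j, .tau i, .tau j]
  | semi (i j : Fin (n-1)) (h : (j:ℕ) = (i:ℕ) + 1) :
      RelStrong n [.tau i, .tau j, .zeta i] [.zeta j, .tau i, .tau j]

/-- The defining relations of `F_n`. -/
inductive RelF (n : ℕ) : List (Letter n) → List (Letter n) → Prop
  | strong {r1 r2} : RelStrong n r1 r2 → RelF n r1 r2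
  | zz (i : Fin (n-1)) : RelF n [.zeta i, .zeta i] []

/-- The defining relations of the free braid group `FB_n`. -/
inductive RelFB (n : ℕ) : List (Letter n) → List (Letter n) → Prop
  | ofF {r1 r2} : RelF n r1 r2 → RelFB n r1 r2
  | r3c (i j : Fin (n-1)) (h : (j:ℕ) = (i:ℕ) + 1) :
      RelFB n [.zeta i, .zeta j, .zeta i] [.zeta j, .zeta i, .zeta j]

/-- One application of a relation from `R` inside a word. -/
def StepOf {n : ℕ} (R : List (Letter n) → List (Letter n) → Prop)
    (w1 w2 : List (Letter n)) : Prop :=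
  ∃ A B r1 r2, R r1 r2 ∧ w1 = A ++ r1 ++ B ∧ w2 = A ++ r2 ++ B

/-- Strong equivalence: all moves of `F_n` except `ζ_i² = 1`. -/
def StrongEq {n : ℕ} (w1 w2 : List (Letter n)) : Prop :=
  Relation.EqvGen (StepOf (RelStrong n)) w1 w2

/-- Equivalence of braid words as elements of `F_n`. -/
def EqF {n : ℕ} (w1 w2 : List (Letter n)) : Prop :=
  Relation.EqvGen (StepOf (RelF n)) w1 w2

/-- Equivalence of braid words as elements of the free braid group `FB_n`. -/
def EqFB {n : ℕ} (w1 w2 : List (Letter n)) : Prop :=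
  Relation.EqvGen (StepOf (RelFB n)) w1 w2

/-- The parity axioms, for a parity `P` defined on the class `C` of braid words.
`P w j` is the parity of the crossing at position `j` of `w` (only classical
positions matter). -/
structure IsParity {n : ℕ} (C : List (Letter n) → Prop)
    (P : List (Letter n) → ℕ → ZMod 2) : Prop where
  /-- Crossings not taking part in a relation keep their parity (part before). -/
  untouched_left : ∀ A B r1 r2, RelFB n r1 r2 →
    C (A ++ r1 ++ B) → C (A ++ r2 ++ B) → ∀ j < A.length,
    P (A ++ r1 ++ B) j = P (A ++ r2 ++ B) j
  /-- Crossings not taking part in a relation keep their parity (part after). -/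
  untouched_right : ∀ A B r1 r2, RelFB n r1 r2 →
    C (A ++ r1 ++ B) → C (A ++ r2 ++ B) → ∀ j < B.length,
    P (A ++ r1 ++ B) (A.length + r1.length + j) = P (A ++ r2 ++ B) (A.length + r2.length + j)
  /-- In commutation-type relations (far commutativity, virtualization), the two
  letters keep their parities. -/
  comm : ∀ A B x y, RelFB n [x, y] [y, x] →
    C (A ++ [x, y] ++ B) → C (A ++ [y, x] ++ B) →
    P (A ++ [x, y] ++ B) A.length = P (A ++ [y, x] ++ B) (A.length + 1) ∧
    P (A ++ [x, y] ++ B) (A.length + 1) = P (A ++ [y, x] ++ B) A.length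
  /-- In a classical second Reidemeister move both crossings have the same parity. -/
  r2c : ∀ A B (i : Fin (n-1)),
    C (A ++ [.zeta i, .zeta i] ++ B) → C (A ++ B) →
    P (A ++ [.zeta i, .zeta i] ++ B) A.length
      = P (A ++ [.zeta i, .zeta i] ++ B) (A.length + 1)
  /-- In a semivirtual move, the classical crossing keeps its parity. -/
  semiv : ∀ A B (i j : Fin (n-1)), (j:ℕ) = (i:ℕ) + 1 →
    C (A ++ [.tau i, .tau j, .zeta i] ++ B) →
    C (A ++ [.zeta j, .tau i, .tau j] ++ B) →
    P (A ++ [.tau i, .tau j, .zeta i] ++ B) (A.length + 2)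
      = P (A ++ [.zeta j, .tau i, .tau j] ++ B) A.length
  /-- In a classical third Reidemeister move the number of odd crossings is even. -/
  r3_even : ∀ A B (i j : Fin (n-1)), (j:ℕ) = (i:ℕ) + 1 →
    C (A ++ [.zeta i, .zeta j, .zeta i] ++ B) →
    C (A ++ [.zeta j, .zeta i, .zeta j] ++ B) →
    P (A ++ [.zeta i, .zeta j, .zeta i] ++ B) A.length
      + P (A ++ [.zeta i, .zeta j, .zeta i] ++ B) (A.length + 1)
      + P (A ++ [.zeta i, .zeta j, .zeta i] ++ B) (A.length + 2) = 0
  /-- In a classical third Reidemeister move, upper/middle/lower crossings on the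
  left correspond to lower/middle/upper crossings on the right with equal parities. -/
  r3_corr : ∀ A B (i j : Fin (n-1)), (j:ℕ) = (i:ℕ) + 1 →
    C (A ++ [.zeta i, .zeta j, .zeta i] ++ B) →
    C (A ++ [.zeta j, .zeta i, .zeta j] ++ B) →
    P (A ++ [.zeta i, .zeta j, .zeta i] ++ B) A.length
      = P (A ++ [.zeta j, .zeta i, .zeta j] ++ B) (A.length + 2) ∧
    P (A ++ [.zeta i, .zeta j, .zeta i] ++ B) (A.length + 1)
      = P (A ++ [.zeta j, .zeta i, .zeta j] ++ B) (A.length + 1) ∧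
    P (A ++ [.zeta i, .zeta j, .zeta i] ++ B) (A.length + 2)
      = P (A ++ [.zeta j, .zeta i, .zeta j] ++ B) A.length

/-- Delete from `w` all classical letters whose parity (given by `par`) is even. -/
def deleteEven {n : ℕ} (w : List (Letter n)) (par : ℕ → ZMod 2) : List (Letter n) :=
  (List.range w.length).filterMap fun j =>
    (w[j]?).bind fun g =>
      match g with
      | .zeta i => if par j = 0 then none else some (.zeta i)
      | .tau i => some (.tau i)

/-- The one-term parity bracket: delete all even classical crossings. -/
def bracket {n : ℕ} (P : List (Letter n) → ℕ → ZMod 2) (w : List (Letter n)) :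
    List (Letter n) :=
  deleteEven w (P w)

/-- Positions of classical crossings of a word. -/
def ZetaPos {n : ℕ} (w : List (Letter n)) : Set ℕ :=
  {j | ∃ i, w[j]? = some (Letter.zeta i)}

/-- The classical crossings at positions `j1 < j2` form a bigon: they lie on the same
pair of strands, and no classical crossing between them lies on either of those strands. -/
def IsBigon {n : ℕ} (w : List (Letter n)) (j1 j2 : ℕ) : Prop :=
  j1 < j2 ∧ j1 ∈ ZetaPos w ∧ j2 ∈ ZetaPos w ∧
  strandsAt w j1 = strandsAt w j2 ∧
  ∀ k, j1 < k → k < j2 → k ∈ ZetaPos w →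
    ∀ e e', strandsAt w j1 = some e → strandsAt w k = some e' → ∀ a ∈ e, a ∉ e'

/-- Delete the letters at two given positions. -/
def delete2 {n : ℕ} (w : List (Letter n)) (j1 j2 : ℕ) : List (Letter n) :=
  (w.eraseIdx (max j1 j2)).eraseIdx (min j1 j2)

/-- One bigon reduction. -/
def BigonStep {n : ℕ} (w w' : List (Letter n)) : Prop :=
  ∃ j1 j2, IsBigon w j1 j2 ∧ w' = delete2 w j1 j2

/-- A word is irreducible if it admits no bigon reduction. -/
def Irreducible {n : ℕ} (w : List (Letter n)) : Prop := ¬ ∃ j1 j2, IsBigon w j1 j2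

/-- Number of classical letters of a word. -/
def countZeta {n : ℕ} (w : List (Letter n)) : ℕ := (w.filter Letter.isZeta).length

/-- `φ` is an isomorphism of the decorated graphs `Γ(w1) ≅ Γ(w2)`, encoded
combinatorially: a bijection of classical crossings preserving the pair of strands
through each crossing, the order of crossings along each strand, and the endpoint
structure (the permutation). -/
structure IsGammaIso {n : ℕ} (w1 w2 : List (Letter n)) (φ : ℕ → ℕ) : Prop where
  maps : ∀ j ∈ ZetaPos w1, φ j ∈ ZetaPos w2
  inj : ∀ j ∈ ZetaPos w1, ∀ j' ∈ ZetaPos w1, φ j = φ j' → j = j'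
  surj : ∀ k ∈ ZetaPos w2, ∃ j ∈ ZetaPos w1, φ j = k
  strands : ∀ j ∈ ZetaPos w1, strandsAt w2 (φ j) = strandsAt w1 j
  order : ∀ j ∈ ZetaPos w1, ∀ j' ∈ ZetaPos w1, j < j' →
    (∃ e e' a, strandsAt w1 j = some e ∧ strandsAt w1 j' = some e' ∧ a ∈ e ∧ a ∈ e') →
    φ j < φ j'
  perm : permOf w1 = permOf w2

/-! ### The groups `F_n` and `FB_n` as presented groups -/

/-- Generators: `Sum.inl i` is the classical generator `ζ_i`,
`Sum.inr i` is the virtual generator `τ_i`. -/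
abbrev GGen (n : ℕ) := Fin (n-1) ⊕ Fin (n-1)

def zg {n : ℕ} (i : Fin (n-1)) : FreeGroup (GGen n) := FreeGroup.of (Sum.inl i)
def tg {n : ℕ} (i : Fin (n-1)) : FreeGroup (GGen n) := FreeGroup.of (Sum.inr i)

/-- The relators of `F_n`. -/
def FRels (n : ℕ) : Set (FreeGroup (GGen n)) :=
  (⋃ i, {zg i * zg i}) ∪ (⋃ i, {tg i * tg i}) ∪
  (⋃ i, {zg i * tg i * (tg i * zg i)⁻¹}) ∪
  (⋃ (i : Fin (n-1)) (j : Fin (n-1)) (_ : 2 ≤ Nat.dist i j),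
    {zg i * zg j * (zg j * zg i)⁻¹, zg i * tg j * (tg j * zg i)⁻¹,
     tg i * tg j * (tg j * tg i)⁻¹}) ∪
  (⋃ (i : Fin (n-1)) (j : Fin (n-1)) (_ : (j:ℕ) = (i:ℕ) + 1),
    {tg i * tg j * tg i * (tg j * tg i * tg j)⁻¹,
     tg i * tg j * zg i * (zg j * tg i * tg j)⁻¹})

/-- The relators of `FB_n`: those of `F_n` together with the classical third
Reidemeister relation. -/
def FBRels (n : ℕ) : Set (FreeGroup (GGen n)) :=
  FRels n ∪
  (⋃ (i : Fin (n-1)) (j : Fin (n-1)) (_ : (j:ℕ) = (i:ℕ) + 1),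
    {zg i * zg j * zg i * (zg j * zg i * zg j)⁻¹})

/-- The group `F_n`. -/
abbrev FGrp (n : ℕ) := PresentedGroup (FRels n)

/-- The free braid group `FB_n`. -/
abbrev FBGrp (n : ℕ) := PresentedGroup (FBRels n)

def zF {n : ℕ} (i : Fin (n-1)) : FGrp n := PresentedGroup.of (Sum.inl i)
def tF {n : ℕ} (i : Fin (n-1)) : FGrp n := PresentedGroup.of (Sum.inr i)

/-- Evaluation of a braid word in `F_n`. -/
def evalF {n : ℕ} (w : List (Letter n)) : FGrp n :=
  (w.map fun g => match g with
    | Letter.zeta i => zF i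
    | Letter.tau i => tF i).prod

/-- For each unordered pair of strands, the mod-2 number of classical letters of `w`
at which these two strands cross (strand labels traced from the top). -/
def crossPar {n : ℕ} : List (Letter n) → Sym2 (Fin n) → ZMod 2
  | [], _ => 0
  | g :: rest, e =>
    (match g with
     | Letter.zeta i => if e = s(lo i, hi i) then (1 : ZMod 2) else 0
     | Letter.tau _ => 0) + crossPar rest (e.map (transOf g))

/-! ### Chord diagrams and the Gaussian parity -/

/-- The setoid on strands given by `SameCycle`; its classes are the orbits of `σ`,
i.e. the components of the closure. -/
def sameCycleSetoid {n : ℕ} (σ : Equiv.Perm (Fin n)) : Setoid (Fin n) :=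
  ⟨σ.SameCycle, ⟨Equiv.Perm.SameCycle.refl σ, Equiv.Perm.SameCycle.symm,
    Equiv.Perm.SameCycle.trans⟩⟩

/-- The rank of a strand in the single cycle of `σ` starting from strand `0`. -/
noncomputable def rankIn {n : ℕ} [NeZero n] (σ : Equiv.Perm (Fin n)) (a : Fin n) : ℕ :=
  ((Function.invFun (fun k : Fin n => (σ ^ (k : ℕ)) 0) a : Fin n) : ℕ)

/-- Coordinates on the core circle of the two endpoints of the chord of the classical
crossing at position `j` (the circle traverses the strands in the cyclic order of `σ`). -/
noncomputable def chordEnds {n : ℕ} [NeZero n] (w : List (Letter n))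
    (σ : Equiv.Perm (Fin n)) (j : ℕ) : ℕ × ℕ :=
  match w[j]? with
  | some (Letter.zeta i) =>
      (rankIn σ ((prefPerm w j)⁻¹ (lo i)) * w.length + j,
       rankIn σ ((prefPerm w j)⁻¹ (hi i)) * w.length + j)
  | _ => (0, 0)

/-- Two chords are linked iff the endpoints of one separate the endpoints of the
other on the core circle. -/
def LinkedChords {n : ℕ} [NeZero n] (w : List (Letter n)) (σ : Equiv.Perm (Fin n))
    (j k : ℕ) : Prop :=
  Xor' (min (chordEnds w σ j).1 (chordEnds w σ j).2 < (chordEnds w σ k).1 ∧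
        (chordEnds w σ k).1 < max (chordEnds w σ j).1 (chordEnds w σ j).2)
       (min (chordEnds w σ j).1 (chordEnds w σ j).2 < (chordEnds w σ k).2 ∧
        (chordEnds w σ k).2 < max (chordEnds w σ j).1 (chordEnds w σ j).2)

/-- The Gaussian parity of the classical crossing at position `j`: the mod-2 number
of chords linked with its chord. Even (`0`) iff linked with evenly many chords. -/
noncomputable def gaussParity {n : ℕ} [NeZero n] (w : List (Letter n))
    (σ : Equiv.Perm (Fin n)) (j : ℕ) : ZMod 2 :=
  (Nat.card {k : ℕ // k < w.length ∧ k ∈ ZetaPos w ∧ k ≠ j ∧ LinkedChords w σ j k} : ZMod 2)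



/-! ## Congruence calculus -/

theorem StrongEq.refl {n : ℕ} (a : List (Letter n)) : StrongEq a a := Relation.EqvGen.refl a
theorem StrongEq.symm {n : ℕ} {a b : List (Letter n)} (h : StrongEq a b) : StrongEq b a :=
  Relation.EqvGen.symm _ _ h
theorem StrongEq.trans {n : ℕ} {a b c : List (Letter n)} (h : StrongEq a b) (h' : StrongEq b c) :
    StrongEq a c := Relation.EqvGen.trans _ _ _ h h'

instance {n : ℕ} : Trans (@StrongEq n) (@StrongEq n) (@StrongEq n) := ⟨StrongEq.trans⟩

theorem StrongEq.rel {n : ℕ} {a b : List (Letter n)} (h : RelStrong n a b) : StrongEq a b :=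
  Relation.EqvGen.rel _ _ ⟨[], [], a, b, h, by simp, by simp⟩

theorem eqv_ctx {n : ℕ} {R : List (Letter n) → List (Letter n) → Prop} {a b : List (Letter n)}
    (X Y : List (Letter n)) (h : Relation.EqvGen (StepOf R) a b) :
    Relation.EqvGen (StepOf R) (X ++ a ++ Y) (X ++ b ++ Y) := by
  induction h with
  | rel a b h =>
    obtain ⟨A, B, r1, r2, h, rfl, rfl⟩ := h
    exact Relation.EqvGen.rel _ _ ⟨X ++ A, B ++ Y, r1, r2, h, by simp, by simp⟩
  | refl a => exact Relation.EqvGen.refl _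
  | symm a b _ ih => exact Relation.EqvGen.symm _ _ ih
  | trans a b c _ _ ih1 ih2 => exact Relation.EqvGen.trans _ _ _ ih1 ih2

theorem StrongEq.left {n : ℕ} {a b : List (Letter n)} (X : List (Letter n)) (h : StrongEq a b) :
    StrongEq (X ++ a) (X ++ b) := by
  have := eqv_ctx X [] h
  simp only [List.append_nil] at this
  exact this

theorem StrongEq.right {n : ℕ} {a b : List (Letter n)} (Y : List (Letter n)) (h : StrongEq a b) :
    StrongEq (a ++ Y) (b ++ Y) := eqv_ctx [] Y h

theorem StrongEq.cons {n : ℕ} {a b : List (Letter n)} (g : Letter n) (h : StrongEq a b) :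
    StrongEq (g :: a) (g :: b) := StrongEq.left [g] h

theorem StrongEq.app {n : ℕ} {a b c d : List (Letter n)} (h : StrongEq a b) (h' : StrongEq c d) :
    StrongEq (a ++ c) (b ++ d) := (StrongEq.right c h).trans (StrongEq.left b h')

theorem eqv_iff {n : ℕ} {R : List (Letter n) → List (Letter n) → Prop}
    {p : List (Letter n) → Prop} (hp : ∀ a b, StepOf R a b → (p a ↔ p b))
    {a b : List (Letter n)} (h : Relation.EqvGen (StepOf R) a b) : p a ↔ p b := by
  induction h with
  | rel a b h => exact hp a b h
  | refl a => exact Iff.rfl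
  | symm a b _ ih => exact ih.symm
  | trans a b c _ _ ih1 ih2 => exact ih1.trans ih2

/-- involutivity of tau-words -/
theorem StrongEq.tt {n : ℕ} (i : Fin (n-1)) (a : List (Letter n)) :
    StrongEq (.tau i :: .tau i :: a) a := StrongEq.right a (StrongEq.rel (RelStrong.tt i))

theorem StrongEq.tau_cancel {n : ℕ} {i : Fin (n-1)} {a b : List (Letter n)}
    (h : StrongEq (.tau i :: a) (.tau i :: b)) : StrongEq a b :=
  (StrongEq.tt i a).symm.trans ((StrongEq.cons _ h).trans (StrongEq.tt i b))

theorem StrongEq.semi' {n : ℕ} (i j : Fin (n-1)) (h : (j:ℕ) = (i:ℕ) + 1) :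
    StrongEq (n := n) [.zeta i, .tau j, .tau i] [.tau j, .tau i, .zeta j] := by
  have h1 := StrongEq.rel (RelStrong.semi i j h)
  have h2 := eqv_ctx [.tau j, .tau i] [.tau j, .tau i] h1
  have e1 : StrongEq (n := n) ([.tau j, .tau i] ++ [.tau i, .tau j, .zeta i] ++ [.tau j, .tau i])
      [.zeta i, .tau j, .tau i] := by
    have := (StrongEq.cons (.tau j) (StrongEq.tt i [.tau j, .zeta i, .tau j, .tau i])).trans
      (StrongEq.tt j [.zeta i, .tau j, .tau i])
    simpa using this
  have e2 : StrongEq (n := n) ([.tau j, .tau i] ++ [.zeta j, .tau i, .tau j] ++ [.tau j, .tau i])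
      [.tau j, .tau i, .zeta j] := by
    have := (StrongEq.left [.tau j, .tau i, .zeta j, .tau i] (StrongEq.tt j [.tau i])).trans
      (StrongEq.left [.tau j, .tau i, .zeta j] (StrongEq.tt i []))
    simpa using this
  exact e1.symm.trans (StrongEq.trans h2 e2)

theorem StrongEq.rev_rel {n : ℕ} {a b : List (Letter n)} (h : RelStrong n a b) :
    StrongEq a.reverse b.reverse := by
  cases h with
  | tt i => exact StrongEq.rel (.tt i)
  | virt i => exact (StrongEq.rel (.virt i)).symm
  | far_zz i j h => exact (StrongEq.rel (.far_zz i j h)).symm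
  | far_zt i j h => exact (StrongEq.rel (.far_zt i j h)).symm
  | far_tt i j h => exact (StrongEq.rel (.far_tt i j h)).symm
  | r3v i j h => exact (StrongEq.rel (.r3v i j h))
  | semi i j h => exact (StrongEq.semi' i j h)

theorem StrongEq.reverse {n : ℕ} {a b : List (Letter n)} (h : StrongEq a b) :
    StrongEq a.reverse b.reverse := by
  induction h with
  | rel a b h =>
    obtain ⟨A, B, r1, r2, h, rfl, rfl⟩ := h
    have := eqv_ctx B.reverse A.reverse (StrongEq.rev_rel h)
    simp only [List.reverse_append, ← List.append_assoc] at this ⊢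
    exact this
  | refl a => exact StrongEq.refl _
  | symm a b _ ih => exact ih.symm
  | trans a b c _ _ ih1 ih2 => exact ih1.trans ih2

/-! ## Deleting classical letters -/

inductive DZ {n : ℕ} : List (Letter n) → List (Letter n) → Prop
  | nil : DZ [] []
  | keep (g : Letter n) {s u} : DZ s u → DZ (g :: s) (g :: u)
  | del (i : Fin (n-1)) {s u} : DZ s u → DZ s (.zeta i :: u)

theorem DZ.refl {n : ℕ} (a : List (Letter n)) : DZ a a := by
  induction a with
  | nil => exact .nil
  | cons g a ih => exact .keep g ih

theorem DZ.sublist {n : ℕ} {s u : List (Letter n)} (h : DZ s u) : s.Sublist u := by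
  induction h with
  | nil => exact List.Sublist.refl _
  | keep g _ ih => exact ih.cons_cons g
  | del i _ ih => exact ih.cons _

theorem DZ.append {n : ℕ} {s u s' u' : List (Letter n)} (h : DZ s u) (h' : DZ s' u') :
    DZ (s ++ s') (u ++ u') := by
  induction h with
  | nil => exact h'
  | keep g _ ih => exact .keep g ih
  | del i _ ih => exact .del i ih

theorem DZ.split {n : ℕ} {s : List (Letter n)} (A B : List (Letter n)) (h : DZ s (A ++ B)) :
    ∃ s1 s2, s = s1 ++ s2 ∧ DZ s1 A ∧ DZ s2 B := by
  induction A generalizing s with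
  | nil => exact ⟨[], s, rfl, .nil, h⟩
  | cons g A ih =>
    cases h with
    | keep _ h =>
      obtain ⟨s1, s2, rfl, h1, h2⟩ := ih h
      exact ⟨g :: s1, s2, rfl, .keep g h1, h2⟩
    | del i h =>
      obtain ⟨s1, s2, rfl, h1, h2⟩ := ih h
      exact ⟨s1, s2, rfl, .del i h1, h2⟩

theorem DZ.trans {n : ℕ} {a b c : List (Letter n)} (h : DZ a b) (h' : DZ b c) : DZ a c := by
  induction h' generalizing a with
  | nil => exact h
  | keep g _ ih =>
    cases h with
    | keep _ h => exact .keep g (ih h)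
    | del i h => exact .del i (ih h)
  | del i _ ih => exact .del i (ih h)

theorem DZ.local {n : ℕ} {r1 r2 s : List (Letter n)}
    (h : RelStrong n r1 r2 ∨ RelStrong n r2 r1) (hs : DZ s r1) :
    ∃ s', DZ s' r2 ∧ StrongEq s s' := by
  have key : (RelStrong n s r2 ∨ RelStrong n r2 s) → ∃ s', DZ s' r2 ∧ StrongEq s s' := by
    rintro (h | h)
    · exact ⟨_, DZ.refl _, StrongEq.rel h⟩
    · exact ⟨_, DZ.refl _, (StrongEq.rel h).symm⟩
  have h0 := h
  rcases h with h | h <;> cases h <;> rcases hs with _ | ⟨_, hs⟩ | ⟨_, hs⟩ <;>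
    (try rcases hs with _ | ⟨_, hs⟩ | ⟨_, hs⟩) <;> (try rcases hs with _ | ⟨_, hs⟩ | ⟨_, hs⟩) <;>
    (try cases hs) <;>
    first
    | exact key h0
    | exact ⟨_, .del _ (.keep _ (.keep _ .nil)), StrongEq.refl _⟩
    | exact ⟨_, .keep _ (.keep _ (.del _ .nil)), StrongEq.refl _⟩
    | exact ⟨_, .del _ (.keep _ .nil), StrongEq.refl _⟩
    | exact ⟨_, .keep _ (.del _ .nil), StrongEq.refl _⟩
    | exact ⟨_, .del _ (.del _ .nil), StrongEq.refl _⟩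

theorem DZ.transport {n : ℕ} {u u' : List (Letter n)} (h : StrongEq u u') :
    ∀ {s}, DZ s u → ∃ s', DZ s' u' ∧ StrongEq s s' := by
  have aux : ∀ A B r1 r2 : List (Letter n), (RelStrong n r1 r2 ∨ RelStrong n r2 r1) → ∀ s,
      DZ s (A ++ r1 ++ B) → ∃ s', DZ s' (A ++ r2 ++ B) ∧ StrongEq s s' := by
    intro A B r1 r2 h s hs
    obtain ⟨x, s3, rfl, hx, h3⟩ := DZ.split _ _ hs
    obtain ⟨s1, s2, rfl, h1, h2⟩ := DZ.split _ _ hx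
    obtain ⟨s', hs', e⟩ := DZ.local h h2
    exact ⟨s1 ++ s' ++ s3, (h1.append hs').append h3, eqv_ctx _ _ e⟩
  intro s hs
  have : (∃ s', DZ s' u ∧ StrongEq s s') ↔ (∃ s', DZ s' u' ∧ StrongEq s s') := by
    refine eqv_iff (p := fun u => ∃ s', DZ s' u ∧ StrongEq s s') ?_ h
    rintro a b ⟨A, B, r1, r2, h, rfl, rfl⟩
    constructor
    · rintro ⟨s', hs', e⟩
      obtain ⟨s'', h'', e'⟩ := aux A B r1 r2 (Or.inl h) s' hs'
      exact ⟨s'', h'', e.trans e'⟩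
    · rintro ⟨s', hs', e⟩
      obtain ⟨s'', h'', e'⟩ := aux A B r2 r1 (Or.inr h) s' hs'
      exact ⟨s'', h'', e.trans e'⟩
  exact this.1 ⟨s, hs, StrongEq.refl _⟩

/-! ## Strand traces -/

/-- the pair of positions of letter index `i` -/
def ePair {n : ℕ} (i : Fin (n-1)) : Sym2 (Fin n) := s(lo i, hi i)

def pi' {n : ℕ} (w : List (Letter n)) : Equiv.Perm (Fin n) := (w.map transOf).prod

def tr {n : ℕ} : List (Letter n) → List (Sym2 (Fin n))
  | [] => []
  | .zeta i :: w => ePair i :: (tr w).map (Sym2.map (sPerm i))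
  | .tau i :: w => (tr w).map (Sym2.map (sPerm i))

def Touch {n : ℕ} (e f : Sym2 (Fin n)) : Prop := ∃ a, a ∈ e ∧ a ∈ f

theorem lo_ne_hi {n : ℕ} (i : Fin (n-1)) : lo i ≠ hi i := by
  simp [lo, hi]

theorem ePair_inj {n : ℕ} {i j : Fin (n-1)} (h : ePair i = ePair j) : i = j := by
  simp only [ePair, lo, hi, Sym2.eq_iff, Fin.mk.injEq] at h
  ext; omega

theorem ePair_self {n : ℕ} (i : Fin (n-1)) : Sym2.map (sPerm i) (ePair i) = ePair i := by
  simp [ePair, sPerm, Sym2.eq_swap]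

theorem far_ne {n : ℕ} {i j : Fin (n-1)} (h : 2 ≤ Nat.dist i j) :
    lo i ≠ lo j ∧ lo i ≠ hi j ∧ hi i ≠ lo j ∧ hi i ≠ hi j := by
  simp only [Nat.dist] at h
  simp only [lo, hi, ne_eq, Fin.mk.injEq]
  omega

theorem ePair_far {n : ℕ} {i j : Fin (n-1)} (h : 2 ≤ Nat.dist i j) :
    Sym2.map (sPerm i) (ePair j) = ePair j := by
  obtain ⟨h1, h2, h3, h4⟩ := far_ne h
  simp [ePair, sPerm, Equiv.swap_apply_of_ne_of_ne, h1.symm, h2.symm, h3.symm, h4.symm]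

theorem far_symm {n : ℕ} {i j : Fin (n-1)} (h : 2 ≤ Nat.dist i j) : 2 ≤ Nat.dist j i := by
  rwa [Nat.dist_comm]

theorem not_touch_far {n : ℕ} {i j : Fin (n-1)} (h : 2 ≤ Nat.dist i j) :
    ¬ Touch (ePair i) (ePair j) := by
  obtain ⟨h1, h2, h3, h4⟩ := far_ne h
  rintro ⟨a, ha, hb⟩
  simp only [ePair, Sym2.mem_iff] at ha hb
  grind

theorem lo_eq_hi {n : ℕ} {i j : Fin (n-1)} (h : (j:ℕ) = (i:ℕ) + 1) : lo j = hi i := by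
  simp [lo, hi, h]

theorem lo_ne_hi' {n : ℕ} {i j : Fin (n-1)} (h : (j:ℕ) = (i:ℕ) + 1) : lo i ≠ hi j := by
  simp only [lo, hi, ne_eq, Fin.mk.injEq]; omega

theorem ePair_semi {n : ℕ} {i j : Fin (n-1)} (h : (j:ℕ) = (i:ℕ) + 1) :
    Sym2.map (sPerm i) (Sym2.map (sPerm j) (ePair i)) = ePair j := by
  have h1 := lo_eq_hi h
  have h2 := lo_ne_hi' h
  have h3 := lo_ne_hi i
  have h4 := lo_ne_hi j
  rw [h1] at h4
  simp only [ePair, sPerm, Sym2.map_mk, h1]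
  rw [Equiv.swap_apply_of_ne_of_ne h3 h2, Equiv.swap_apply_left, Equiv.swap_apply_left,
    Equiv.swap_apply_of_ne_of_ne h2.symm h4.symm]

theorem sPerm_sq {n : ℕ} (i : Fin (n-1)) : sPerm i * sPerm i = 1 := by
  simp [sPerm]

theorem sPerm_comm {n : ℕ} {i j : Fin (n-1)} (h : 2 ≤ Nat.dist i j) :
    sPerm i * sPerm j = sPerm j * sPerm i := by
  obtain ⟨h1, h2, h3, h4⟩ := far_ne h
  apply Equiv.ext
  intro a
  simp only [sPerm, Equiv.Perm.mul_apply, Equiv.swap_apply_def]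
  grind

theorem sPerm_braid {n : ℕ} {i j : Fin (n-1)} (h : (j:ℕ) = (i:ℕ) + 1) :
    sPerm i * sPerm j * sPerm i = sPerm j * sPerm i * sPerm j := by
  have h1 := lo_eq_hi h
  have h2 := lo_ne_hi' h
  have h3 := lo_ne_hi i
  have h4 := lo_ne_hi j
  apply Equiv.ext
  intro a
  simp only [sPerm, Equiv.Perm.mul_apply, Equiv.swap_apply_def]
  grind

theorem pi_append {n : ℕ} (A B : List (Letter n)) : pi' (A ++ B) = pi' A * pi' B := by
  simp [pi']

theorem pi_cons {n : ℕ} (g : Letter n) (B : List (Letter n)) :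
    pi' (g :: B) = transOf g * pi' B := by
  simp [pi']

theorem pi_nil {n : ℕ} : pi' ([] : List (Letter n)) = 1 := rfl

theorem pi_rel {n : ℕ} {r1 r2 : List (Letter n)} (h : RelStrong n r1 r2) : pi' r1 = pi' r2 := by
  cases h with
  | tt i => simp [pi_cons, pi_nil, transOf, Letter.idx, sPerm_sq]
  | virt i => simp [pi_cons, pi_nil, transOf, Letter.idx]
  | far_zz i j h => simp [pi_cons, pi_nil, transOf, Letter.idx, sPerm_comm h]
  | far_zt i j h => simp [pi_cons, pi_nil, transOf, Letter.idx, sPerm_comm h]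
  | far_tt i j h => simp [pi_cons, pi_nil, transOf, Letter.idx, sPerm_comm h]
  | r3v i j h =>
    have := sPerm_braid h
    simp only [mul_assoc] at this
    simp [pi_cons, pi_nil, transOf, Letter.idx, this]
  | semi i j h =>
    have := sPerm_braid h
    simp only [mul_assoc] at this
    simp [pi_cons, pi_nil, transOf, Letter.idx, this]

theorem tr_append {n : ℕ} (A B : List (Letter n)) :
    tr (A ++ B) = tr A ++ (tr B).map (Sym2.map (pi' A)) := by
  induction A with
  | nil =>
    have : Sym2.map (⇑(pi' ([] : List (Letter n)))) = id := by
      simp [pi_nil]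
    simp [tr, this]
  | cons g A ih =>
    have : Sym2.map (⇑(pi' (g :: A))) = Sym2.map (transOf g) ∘ Sym2.map (pi' A) := by
      rw [pi_cons, Equiv.Perm.coe_mul, Sym2.map_comp]
    rw [this]
    cases g <;> simp [tr, ih, transOf, Letter.idx]

inductive Sw {n : ℕ} : List (Sym2 (Fin n)) → List (Sym2 (Fin n)) → Prop
  | refl (l) : Sw l l
  | swap (X Y e f) : ¬ Touch e f → Sw (X ++ e :: f :: Y) (X ++ f :: e :: Y)

theorem touch_map {n : ℕ} (σ : Equiv.Perm (Fin n)) (e f : Sym2 (Fin n)) :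
    Touch (Sym2.map σ e) (Sym2.map σ f) ↔ Touch e f := by
  constructor
  · rintro ⟨a, ha, hb⟩
    obtain ⟨x, hx, rfl⟩ := Sym2.mem_map.1 ha
    obtain ⟨y, hy, h⟩ := Sym2.mem_map.1 hb
    rw [σ.injective h] at hy
    exact ⟨x, hx, hy⟩
  · rintro ⟨a, ha, hb⟩
    exact ⟨σ a, Sym2.mem_map.2 ⟨a, ha, rfl⟩, Sym2.mem_map.2 ⟨a, hb, rfl⟩⟩

theorem touch_symm {n : ℕ} {e f : Sym2 (Fin n)} (h : Touch e f) : Touch f e := by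
  obtain ⟨a, ha, hb⟩ := h; exact ⟨a, hb, ha⟩

theorem touch_self {n : ℕ} (e : Sym2 (Fin n)) : Touch e e := by
  induction e with
  | _ a b => exact ⟨a, by simp, by simp⟩

theorem tr_rel {n : ℕ} {r1 r2 : List (Letter n)} (h : RelStrong n r1 r2) : Sw (tr r1) (tr r2) := by
  cases h with
  | tt i => exact Sw.refl _
  | virt i => simp only [tr, List.map, ePair_self]; exact Sw.refl _
  | far_zz i j h =>
    simp only [tr, List.map, ePair_far h, ePair_far (far_symm h)]
    exact Sw.swap [] [] _ _ (not_touch_far h)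
  | far_zt i j h =>
    simp only [tr, List.map, ePair_far (far_symm h)]
    exact Sw.refl _
  | far_tt i j h => exact Sw.refl _
  | r3v i j h => exact Sw.refl _
  | semi i j h =>
    simp only [tr, List.map, ePair_semi h]
    exact Sw.refl _

theorem tr_step {n : ℕ} {a b : List (Letter n)} (h : StepOf (RelStrong n) a b) :
    Sw (tr a) (tr b) := by
  obtain ⟨A, B, r1, r2, h, rfl, rfl⟩ := h
  rw [tr_append, tr_append, tr_append, tr_append, pi_append, pi_append, pi_rel h]
  generalize (tr B).map _ = Z
  have := tr_rel h
  revert this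
  generalize tr r1 = x
  generalize tr r2 = y
  intro h
  cases h with
  | refl => exact Sw.refl _
  | swap X Y e f h =>
    have := Sw.swap (tr A ++ X.map (Sym2.map (pi' A))) (Y.map (Sym2.map (pi' A)) ++ Z)
      (Sym2.map (pi' A) e) (Sym2.map (pi' A) f) (by rwa [touch_map])
    simpa using this

theorem sw_mem {n : ℕ} {x y : List (Sym2 (Fin n))} (h : Sw x y) (e : Sym2 (Fin n)) :
    e ∈ x ↔ e ∈ y := by
  cases h with
  | refl => exact Iff.rfl
  | swap X Y e f h => simp; tauto

theorem tr_mem {n : ℕ} {a b : List (Letter n)} (h : StrongEq a b) (e : Sym2 (Fin n)) :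
    e ∈ tr a ↔ e ∈ tr b :=
  eqv_iff (p := fun a => e ∈ tr a) (fun _ _ h => sw_mem (tr_step h) e) h

theorem pi_se {n : ℕ} {a b : List (Letter n)} (h : StrongEq a b) : pi' a = pi' b := by
  have := eqv_iff (p := fun x => pi' a = pi' x) ?_ h
  · exact this.1 rfl
  · rintro x y ⟨A, B, r1, r2, h, rfl, rfl⟩
    simp only [pi_append, pi_rel h]

open Classical in
def NoBig {n : ℕ} (l : List (Sym2 (Fin n))) : Prop :=
  ∀ e, List.IsChain (fun x y => ¬ (x = e ∧ y = e)) (l.filter (fun f => decide (Touch e f)))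

open Classical in
theorem sw_noBig {n : ℕ} {x y : List (Sym2 (Fin n))} (h : Sw x y) : NoBig x ↔ NoBig y := by
  cases h with
  | refl => exact Iff.rfl
  | swap X Y f g h =>
    refine forall_congr' fun e => ?_
    by_cases hf : Touch e f <;> by_cases hg : Touch e g <;>
      simp only [List.filter_append, List.filter_cons, hf, hg, decide_true, decide_false,
        if_true, Bool.false_eq_true, if_false]
    have h1 : f ≠ e := by rintro rfl; exact h hg
    have h2 : g ≠ e := by rintro rfl; exact h (touch_symm hf)
    simp [List.isChain_append, List.isChain_cons, h1, h2]

theorem noBig_se {n : ℕ} {a b : List (Letter n)} (h : StrongEq a b) :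
    NoBig (tr a) ↔ NoBig (tr b) :=
  eqv_iff (p := fun a => NoBig (tr a)) (fun _ _ h => sw_noBig (tr_step h)) h

open Classical in
theorem filter_touch_map {n : ℕ} (σ : Equiv.Perm (Fin n)) (e : Sym2 (Fin n))
    (l : List (Sym2 (Fin n))) :
    (l.map (Sym2.map σ)).filter (fun f => decide (Touch e f)) =
      (l.filter (fun f => decide (Touch (Sym2.map (⇑σ⁻¹) e) f))).map (Sym2.map σ) := by
  rw [List.filter_map]
  congr 1
  apply List.filter_congr
  intro f _
  simp only [Function.comp]
  congr 1
  have h : e = Sym2.map σ (Sym2.map (⇑σ⁻¹) e) := by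
    rw [Sym2.map_map]; simp
  conv_lhs => rw [h]
  rw [touch_map]

theorem map_eq_iff {n : ℕ} (σ : Equiv.Perm (Fin n)) (e f : Sym2 (Fin n)) :
    Sym2.map σ f = e ↔ f = Sym2.map (⇑σ⁻¹) e := by
  constructor
  · rintro rfl
    rw [Sym2.map_map]; simp
  · rintro rfl
    rw [Sym2.map_map]; simp

theorem noBig_map {n : ℕ} (σ : Equiv.Perm (Fin n)) (l : List (Sym2 (Fin n))) :
    NoBig (l.map (Sym2.map σ)) ↔ NoBig l := by
  have h1 : ∀ (σ : Equiv.Perm (Fin n)) (l : List (Sym2 (Fin n))),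
      NoBig l → NoBig (l.map (Sym2.map σ)) := by
    intro σ l h e
    rw [filter_touch_map, List.isChain_map]
    simp only [map_eq_iff]
    exact h _
  refine ⟨fun h => ?_, h1 σ l⟩
  have := h1 σ⁻¹ _ h
  simpa [Function.comp_def, Sym2.map_map] using this

theorem noBig_append_right {n : ℕ} (A B : List (Letter n)) (h : NoBig (tr (A ++ B))) :
    NoBig (tr B) := by
  rw [tr_append] at h
  rw [← noBig_map (pi' A)]
  intro e
  have := h e
  rw [List.filter_append] at this
  exact this.right_of_append

theorem not_noBig {n : ℕ} (A : List (Letter n)) (i : Fin (n-1)) (B : List (Letter n)) :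
    ¬ NoBig (tr (A ++ .zeta i :: .zeta i :: B)) := by
  intro h
  have := noBig_append_right _ _ h (ePair i)
  simp [tr, ePair_self, touch_self] at this

/-! ## From irreducibility to `NoBig` -/

theorem strandsAt_zero {n : ℕ} (g : Letter n) (w : List (Letter n)) :
    strandsAt (g :: w) 0 = some (ePair g.idx) := by
  simp [strandsAt, prefPerm, ePair]

theorem strandsAt_succ {n : ℕ} (g : Letter n) (w : List (Letter n)) (j : ℕ) :
    strandsAt (g :: w) (j+1) = (strandsAt w j).map (Sym2.map (transOf g)) := by
  have : (transOf g)⁻¹ = transOf g := by simp [transOf, sPerm]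
  simp [strandsAt, prefPerm, Function.comp_def, this]

theorem zetaPos_succ {n : ℕ} (g : Letter n) (w : List (Letter n)) (j : ℕ) :
    j + 1 ∈ ZetaPos (g :: w) ↔ j ∈ ZetaPos w := by
  simp [ZetaPos]

theorem bigon_succ {n : ℕ} (g : Letter n) (w : List (Letter n)) (j k : ℕ)
    (h : IsBigon w j k) : IsBigon (g :: w) (j+1) (k+1) := by
  obtain ⟨h1, h2, h3, h4, h5⟩ := h
  refine ⟨by omega, (zetaPos_succ ..).2 h2, (zetaPos_succ ..).2 h3, ?_, ?_⟩
  · rw [strandsAt_succ, strandsAt_succ, h4]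
  · intro m hm1 hm2 hm e e' he he' a ha ha'
    obtain ⟨m, rfl⟩ : ∃ m', m = m' + 1 := ⟨m - 1, by omega⟩
    rw [strandsAt_succ] at he he'
    obtain ⟨f, hf, rfl⟩ := Option.map_eq_some_iff.1 he
    obtain ⟨f', hf', rfl⟩ := Option.map_eq_some_iff.1 he'
    obtain ⟨b, hb, hb'⟩ := (touch_map _ _ _).1 ⟨a, ha, ha'⟩
    exact h5 m (by omega) (by omega) ((zetaPos_succ ..).1 hm) f f' hf hf' b hb hb'

open Classical in
theorem head_bigon {n : ℕ} (w : List (Letter n)) (e : Sym2 (Fin n))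
    (h : ((tr w).filter (fun f => decide (Touch e f))).head? = some e) :
    ∃ j ∈ ZetaPos w, strandsAt w j = some e ∧
      ∀ k < j, k ∈ ZetaPos w → ∀ e', strandsAt w k = some e' → ¬ Touch e e' := by
  induction w generalizing e with
  | nil => simp [tr] at h
  | cons g w ih =>
    have key : (((tr w).map (Sym2.map (transOf g))).filter
          (fun f => decide (Touch e f))).head? = some e →
        (0 ∈ ZetaPos (g :: w) → ¬ Touch e (ePair g.idx)) → ∃ j ∈ ZetaPos (g :: w),
        strandsAt (g :: w) j = some e ∧ ∀ k < j, k ∈ ZetaPos (g :: w) → ∀ e',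
          strandsAt (g :: w) k = some e' → ¬ Touch e e' := by
      intro h h0
      rw [filter_touch_map, List.head?_map] at h
      obtain ⟨f, hf, hfe⟩ := Option.map_eq_some_iff.1 h
      rw [← (map_eq_iff _ _ _).1 hfe] at hf
      obtain ⟨j, hj, hs, hk⟩ := ih f hf
      refine ⟨j+1, (zetaPos_succ ..).2 hj, by rw [strandsAt_succ, hs, Option.map_some, hfe], ?_⟩
      intro k hkj hkz e' he'
      cases k with
      | zero =>
        rw [strandsAt_zero] at he'
        cases he'
        exact h0 hkz
      | succ k =>
        rw [strandsAt_succ] at he'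
        obtain ⟨f', hf', rfl⟩ := Option.map_eq_some_iff.1 he'
        rw [← hfe, touch_map]
        exact hk k (by omega) ((zetaPos_succ ..).1 hkz) f' hf'
    cases g with
    | tau i =>
      refine key h ?_
      simp [ZetaPos]
    | zeta i =>
      by_cases ht : Touch e (ePair i)
      · simp [tr, ht] at h
        subst h
        exact ⟨0, ⟨i, rfl⟩, strandsAt_zero _ _, by simp⟩
      · refine key ?_ (fun _ => ht)
        simp only [tr, List.filter_cons, ht, decide_false, Bool.false_eq_true, if_false] at h
        exact h

theorem irr_noBig {n : ℕ} (w : List (Letter n)) (h : Irreducible w) : NoBig (tr w) := by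
  classical
  induction w with
  | nil => intro e; simp [tr]
  | cons g w ih =>
    have hw : NoBig (tr w) := ih (by
      rintro ⟨j, k, hb⟩
      exact h ⟨j+1, k+1, bigon_succ g w j k hb⟩)
    have hm : NoBig ((tr w).map (Sym2.map (transOf g))) := (noBig_map _ _).2 hw
    cases g with
    | tau i => exact hm
    | zeta i =>
      intro e
      have hme := hm e
      simp only [tr, List.filter_cons]
      split_ifs with ht
      · rw [List.isChain_cons]
        refine ⟨?_, hme⟩
        rintro y hy ⟨he, rfl⟩
        apply h
        subst he
        change _ = some _ at hy
        rw [filter_touch_map, List.head?_map] at hy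
        obtain ⟨f, hf, hfe⟩ := Option.map_eq_some_iff.1 hy
        rw [← (map_eq_iff _ _ _).1 hfe] at hf
        obtain ⟨j, hj, hs, hk⟩ := head_bigon w f hf
        refine ⟨0, j+1, by omega, ⟨i, rfl⟩, (zetaPos_succ ..).2 hj, ?_, ?_⟩
        · rw [strandsAt_zero, strandsAt_succ, hs]
          exact congrArg some hfe.symm
        · intro k hk1 hk2 hkz e1 e2 h1 h2 a ha1 ha2
          obtain ⟨k, rfl⟩ : ∃ m', k = m' + 1 := ⟨k - 1, by omega⟩
          rw [strandsAt_zero] at h1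
          rw [strandsAt_succ] at h2
          cases h1
          obtain ⟨f', hf', rfl⟩ := Option.map_eq_some_iff.1 h2
          refine hk k (by omega) ((zetaPos_succ ..).1 hkz) f' hf' ?_
          rw [← touch_map (sPerm i), hfe]
          exact ⟨a, ha1, ha2⟩
      · exact hme

/-! ## Following one classical letter -/

inductive Mv {n : ℕ} : Fin (n-1) → List (Letter n) → Fin (n-1) → Prop
  | virt (k : Fin (n-1)) : Mv k [.tau k] k
  | farT (k j : Fin (n-1)) : 2 ≤ Nat.dist k j → Mv k [.tau j] k
  | farZ (k j : Fin (n-1)) : 2 ≤ Nat.dist k j → Mv k [.zeta j] k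
  | semi (i j : Fin (n-1)) : (j:ℕ) = (i:ℕ) + 1 → Mv j [.tau i, .tau j] i

theorem Mv.se {n : ℕ} {k k' : Fin (n-1)} {t : List (Letter n)} (h : Mv k t k') :
    StrongEq (.zeta k :: t) (t ++ [.zeta k']) := by
  cases h with
  | virt => exact StrongEq.rel (.virt _)
  | farT _ j h => exact StrongEq.rel (.far_zt _ _ h)
  | farZ _ j h => exact StrongEq.rel (.far_zz _ _ h)
  | semi _ j h => exact (StrongEq.rel (.semi _ _ h)).symm

theorem mv_local {n : ℕ} {r1 r2 r' r'' : List (Letter n)} {k : Fin (n-1)}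
    (h : RelStrong n r1 r2 ∨ RelStrong n r2 r1) (hr : r1 = r' ++ .zeta k :: r'') :
    ∃ p' k' p'', r2 = p' ++ .zeta k' :: p'' ∧ StrongEq (r' ++ r'') (p' ++ p'') ∧
      ((∃ t, Mv k t k' ∧ p' = r' ++ t) ∨ (∃ t, Mv k' t k ∧ r' = p' ++ t)) := by
  have one : ∀ {x y : Letter n}, [x, y] = r' ++ .zeta k :: r'' →
      (r' = [] ∧ x = .zeta k ∧ r'' = [y]) ∨ (r' = [x] ∧ y = .zeta k ∧ r'' = []) := by
    intro x y h
    rcases r' with _ | ⟨a, _ | ⟨b, r'⟩⟩ <;> simp_all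
  have two : ∀ {x y z : Letter n}, [x, y, z] = r' ++ .zeta k :: r'' →
      (r' = [] ∧ x = .zeta k ∧ r'' = [y, z]) ∨ (r' = [x] ∧ y = .zeta k ∧ r'' = [z]) ∨
      (r' = [x, y] ∧ z = .zeta k ∧ r'' = []) := by
    intro x y z h
    rcases r' with _ | ⟨a, _ | ⟨b, _ | ⟨c, r'⟩⟩⟩ <;> simp_all
  rcases h with h | h
  · cases h with
    | tt i => rcases one hr with ⟨rfl, h, rfl⟩ | ⟨rfl, h, rfl⟩ <;> cases h
    | virt i =>
      rcases one hr with ⟨rfl, h, rfl⟩ | ⟨rfl, h, rfl⟩ <;> cases h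
      exact ⟨[.tau k], k, [], rfl, StrongEq.refl _, Or.inl ⟨_, .virt k, rfl⟩⟩
    | far_zz i j hd =>
      rcases one hr with ⟨rfl, h, rfl⟩ | ⟨rfl, h, rfl⟩ <;> cases h
      · exact ⟨[.zeta j], k, [], rfl, StrongEq.refl _, Or.inl ⟨_, .farZ k j hd, rfl⟩⟩
      · exact ⟨[], k, [.zeta i], rfl, StrongEq.refl _, Or.inr ⟨_, .farZ k i (far_symm hd), rfl⟩⟩
    | far_zt i j hd =>
      rcases one hr with ⟨rfl, h, rfl⟩ | ⟨rfl, h, rfl⟩ <;> cases h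
      exact ⟨[.tau j], k, [], rfl, StrongEq.refl _, Or.inl ⟨_, .farT k j hd, rfl⟩⟩
    | far_tt i j hd => rcases one hr with ⟨rfl, h, rfl⟩ | ⟨rfl, h, rfl⟩ <;> cases h
    | r3v i j hd =>
      rcases two hr with ⟨rfl, h, rfl⟩ | ⟨rfl, h, rfl⟩ | ⟨rfl, h, rfl⟩ <;> cases h
    | semi i j hd =>
      rcases two hr with ⟨rfl, h, rfl⟩ | ⟨rfl, h, rfl⟩ | ⟨rfl, h, rfl⟩ <;> cases h
      exact ⟨[], j, [.tau k, .tau j], rfl, StrongEq.refl _, Or.inr ⟨_, .semi k j hd, rfl⟩⟩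
  · cases h with
    | tt i => simp at hr
    | virt i =>
      rcases one hr with ⟨rfl, h, rfl⟩ | ⟨rfl, h, rfl⟩ <;> cases h
      exact ⟨[], k, [.tau k], rfl, StrongEq.refl _, Or.inr ⟨_, .virt k, rfl⟩⟩
    | far_zz i j hd =>
      rcases one hr with ⟨rfl, h, rfl⟩ | ⟨rfl, h, rfl⟩ <;> cases h
      · exact ⟨[.zeta i], k, [], rfl, StrongEq.refl _, Or.inl ⟨_, .farZ k i (far_symm hd), rfl⟩⟩
      · exact ⟨[], k, [.zeta j], rfl, StrongEq.refl _, Or.inr ⟨_, .farZ k j hd, rfl⟩⟩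
    | far_zt i j hd =>
      rcases one hr with ⟨rfl, h, rfl⟩ | ⟨rfl, h, rfl⟩ <;> cases h
      exact ⟨[], k, [.tau j], rfl, StrongEq.refl _, Or.inr ⟨_, .farT k j hd, rfl⟩⟩
    | far_tt i j hd => rcases one hr with ⟨rfl, h, rfl⟩ | ⟨rfl, h, rfl⟩ <;> cases h
    | r3v i j hd =>
      rcases two hr with ⟨rfl, h, rfl⟩ | ⟨rfl, h, rfl⟩ | ⟨rfl, h, rfl⟩ <;> cases h
    | semi i j hd =>
      rcases two hr with ⟨rfl, h, rfl⟩ | ⟨rfl, h, rfl⟩ | ⟨rfl, h, rfl⟩ <;> cases h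
      exact ⟨[.tau i, .tau k], i, [], rfl, StrongEq.refl _, Or.inl ⟨_, .semi i k hd, rfl⟩⟩

theorem split3 {α : Type*} {A r B U V : List α} {z : α} (h : A ++ r ++ B = U ++ z :: V) :
    (∃ A2, A = U ++ z :: A2 ∧ V = A2 ++ r ++ B) ∨
    (∃ r' r'', r = r' ++ z :: r'' ∧ U = A ++ r' ∧ V = r'' ++ B) ∨
    (∃ B1, B = B1 ++ z :: V ∧ U = A ++ r ++ B1) := by
  rw [List.append_eq_append_iff] at h
  rcases h with ⟨x, hU, hB⟩ | ⟨x, hx, hz⟩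
  · exact Or.inr (Or.inr ⟨x, hB, hU⟩)
  · rcases x with _ | ⟨y, x⟩
    · right; right
      refine ⟨[], ?_, ?_⟩
      · simpa using hz.symm
      · simpa using hx.symm
    · simp only [List.cons_append, List.cons.injEq] at hz
      obtain ⟨rfl, rfl⟩ := hz
      rw [List.append_eq_append_iff] at hx
      rcases hx with ⟨x', hU, hr⟩ | ⟨x', hA, hz⟩
      · exact Or.inr (Or.inl ⟨x', x, hr, hU, rfl⟩)
      · rcases x' with _ | ⟨y', x'⟩
        · right; left
          exact ⟨[], x, by simpa using hz.symm, by simpa using hA.symm, rfl⟩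
        · simp only [List.cons_append, List.cons.injEq] at hz
          obtain ⟨rfl, rfl⟩ := hz
          exact Or.inl ⟨x', hA, by simp⟩

theorem follow {n : ℕ} (i : Fin (n-1)) (Q : List (Letter n) → Fin (n-1) → Prop)
    (h0 : Q [] i) (hse : ∀ U U' k, StrongEq U U' → Q U k → Q U' k)
    (hf : ∀ U k t k', Mv k t k' → (Q U k ↔ Q (U ++ t) k'))
    {y u : List (Letter n)} (h : StrongEq (.zeta i :: y) u) :
    ∃ U k V, u = U ++ .zeta k :: V ∧ StrongEq (U ++ V) y ∧ Q U k := by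
  have aux : ∀ A B r1 r2 : List (Letter n), (RelStrong n r1 r2 ∨ RelStrong n r2 r1) →
      (∃ U k V, A ++ r1 ++ B = U ++ .zeta k :: V ∧ StrongEq (U ++ V) y ∧ Q U k) →
      (∃ U k V, A ++ r2 ++ B = U ++ .zeta k :: V ∧ StrongEq (U ++ V) y ∧ Q U k) := by
    rintro A B r1 r2 hr ⟨U, k, V, hu, hy, hq⟩
    have hr12 : StrongEq r1 r2 := by
      rcases hr with hr | hr
      · exact StrongEq.rel hr
      · exact (StrongEq.rel hr).symm
    rcases split3 hu with ⟨A2, rfl, rfl⟩ | ⟨r', r'', hr', rfl, rfl⟩ | ⟨B1, rfl, rfl⟩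
    · refine ⟨U, k, A2 ++ r2 ++ B, by simp, ?_, hq⟩
      refine StrongEq.trans ?_ hy
      have := StrongEq.app (StrongEq.refl (U ++ A2)) (StrongEq.right B hr12.symm)
      simpa using this
    · obtain ⟨p', k', p'', hp, he, ht⟩ := mv_local hr hr'
      refine ⟨A ++ p', k', p'' ++ B, by simp [hp], ?_, ?_⟩
      · refine StrongEq.trans ?_ hy
        have := StrongEq.left A (StrongEq.right B he.symm)
        simpa using this
      · rcases ht with ⟨t, ht, rfl⟩ | ⟨t, ht, rfl⟩
        · rw [← List.append_assoc]
          exact (hf _ _ _ _ ht).1 hq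
        · rw [← List.append_assoc] at hq
          exact (hf _ _ _ _ ht).2 hq
    · refine ⟨A ++ r2 ++ B1, k, V, by simp, ?_, ?_⟩
      · refine StrongEq.trans ?_ hy
        have := StrongEq.left A (StrongEq.right (B1 ++ V) hr12.symm)
        simpa using this
      · exact hse _ _ _ (StrongEq.right B1 (StrongEq.left A hr12)) hq
  refine (eqv_iff (p := fun u => ∃ U k V, u = U ++ .zeta k :: V ∧ StrongEq (U ++ V) y ∧ Q U k)
    ?_ h).1 ⟨[], i, y, rfl, StrongEq.refl _, h0⟩
  rintro a b ⟨A, B, r1, r2, h, rfl, rfl⟩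
  exact ⟨aux A B r1 r2 (Or.inl h), aux A B r2 r1 (Or.inr h)⟩

theorem Mv.pair {n : ℕ} {k k' : Fin (n-1)} {t : List (Letter n)} (h : Mv k t k') :
    Sym2.map (pi' t) (ePair k') = ePair k := by
  cases h with
  | virt => simp [pi_cons, pi_nil, transOf, Letter.idx, ePair_self]
  | farT _ j h => simp [pi_cons, pi_nil, transOf, Letter.idx, ePair_far (far_symm h)]
  | farZ _ j h => simp [pi_cons, pi_nil, transOf, Letter.idx, ePair_far (far_symm h)]
  | semi _ j h =>
    rw [← ePair_semi h, Sym2.map_map]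
    simp [pi_cons, pi_nil, transOf, Letter.idx]

theorem Mv.not_mem {n : ℕ} {k k' : Fin (n-1)} {t : List (Letter n)} (h : Mv k t k') :
    ePair k ∉ tr t := by
  cases h with
  | virt => simp [tr]
  | farT _ j h => simp [tr]
  | farZ _ j h =>
    simp only [tr, List.map, List.mem_singleton]
    intro e
    rw [ePair_inj e] at h
    simp at h
  | semi _ j h => simp [tr]

theorem zeta_cancel {n : ℕ} {i : Fin (n-1)} {y y' : List (Letter n)}
    (h : StrongEq (.zeta i :: y) (.zeta i :: y')) : StrongEq y y' := by
  obtain ⟨U, k, V, hu, hy, hq1, hq2⟩ := follow i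
    (fun U k => ePair i ∉ tr U ∧ Sym2.map (pi' U) (ePair k) = ePair i)
    (by simp [tr, pi_nil]) (by
      intro U U' k h ⟨h1, h2⟩
      rw [← tr_mem h, ← pi_se h]
      exact ⟨h1, h2⟩) (by
      intro U k t k' hm
      rw [tr_append, pi_append, Equiv.Perm.coe_mul, ← Sym2.map_map, hm.pair]
      simp only [List.mem_append, not_or]
      constructor
      · rintro ⟨h1, h2⟩
        refine ⟨⟨h1, ?_⟩, h2⟩
        rw [← h2, List.mem_map]
        rintro ⟨f, hf, he⟩
        rw [Sym2.map.injective (pi' U).injective he] at hf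
        exact hm.not_mem hf
      · rintro ⟨⟨h1, _⟩, h2⟩
        exact ⟨h1, h2⟩) h
  cases U with
  | nil =>
    simp only [List.nil_append, List.cons.injEq] at hu
    rw [hu.2]
    exact hy.symm
  | cons g U =>
    simp only [List.cons_append, List.cons.injEq] at hu
    exfalso
    apply hq1
    rw [← hu.1]
    simp [tr]

theorem cancel_left {n : ℕ} (A : List (Letter n)) {y y' : List (Letter n)}
    (h : StrongEq (A ++ y) (A ++ y')) : StrongEq y y' := by
  induction A with
  | nil => exact h
  | cons g A ih =>
    cases g with
    | zeta i => exact ih (zeta_cancel h)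
    | tau i => exact ih (StrongEq.tau_cancel h)

theorem cancel_right {n : ℕ} (A : List (Letter n)) {y y' : List (Letter n)}
    (h : StrongEq (y ++ A) (y' ++ A)) : StrongEq y y' := by
  have := h.reverse
  rw [List.reverse_append, List.reverse_append] at this
  have := (cancel_left _ this).reverse
  simpa using this

theorem slide {n : ℕ} {i : Fin (n-1)} {y u : List (Letter n)}
    (h : StrongEq (.zeta i :: y) u) :
    ∃ U k V, u = U ++ .zeta k :: V ∧ StrongEq (U ++ V) y ∧
      StrongEq (.zeta i :: U) (U ++ [.zeta k]) := by
  refine follow i (fun U k => StrongEq (.zeta i :: U) (U ++ [.zeta k])) (StrongEq.refl _) ?_ ?_ h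
  · intro U U' k h h'
    exact (StrongEq.cons _ h.symm).trans (h'.trans (StrongEq.right _ h))
  · intro U k t k' hm
    have e : StrongEq (U ++ [.zeta k] ++ t) (U ++ t ++ [.zeta k']) := by
      have := StrongEq.left U hm.se
      simpa using this
    constructor
    · intro h
      exact (StrongEq.right t h).trans e
    · intro h
      exact cancel_right t (h.trans e.symm)

/-! ## Normal forms -/

def Irr' {n : ℕ} (u : List (Letter n)) : Prop :=
  ∀ A i y, ¬ StrongEq u (A ++ .zeta i :: .zeta i :: y)

theorem Irr'.se {n : ℕ} {u v : List (Letter n)} (h : Irr' u) (e : StrongEq u v) : Irr' v :=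
  fun A i y h' => h A i y (e.trans h')

theorem Irr'.tail {n : ℕ} {g : Letter n} {u : List (Letter n)} (h : Irr' (g :: u)) : Irr' u :=
  fun A i y h' => h (g :: A) i y (StrongEq.cons g h')

open Classical in
noncomputable def act {n : ℕ} (i : Fin (n-1)) (u : List (Letter n)) : List (Letter n) :=
  if h : ∃ y, StrongEq u (.zeta i :: y) then h.choose else .zeta i :: u

theorem act_pos {n : ℕ} {i : Fin (n-1)} {u y : List (Letter n)} (h : StrongEq u (.zeta i :: y)) :
    StrongEq (act i u) y := by
  have h' : ∃ y, StrongEq u (.zeta i :: y) := ⟨y, h⟩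
  rw [act, dif_pos h']
  exact zeta_cancel (h'.choose_spec.symm.trans h)

theorem act_neg {n : ℕ} {i : Fin (n-1)} {u : List (Letter n)}
    (h : ¬ ∃ y, StrongEq u (.zeta i :: y)) : act i u = .zeta i :: u := by
  rw [act, dif_neg h]

theorem act_congr {n : ℕ} {i : Fin (n-1)} {u u' : List (Letter n)} (h : StrongEq u u') :
    StrongEq (act i u) (act i u') := by
  by_cases hy : ∃ y, StrongEq u (.zeta i :: y)
  · obtain ⟨y, hy⟩ := hy
    exact (act_pos hy).trans (act_pos (h.symm.trans hy)).symm
  · have hy' : ¬ ∃ y, StrongEq u' (.zeta i :: y) := by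
      rintro ⟨y, h'⟩
      exact hy ⟨y, h.trans h'⟩
    rw [act_neg hy, act_neg hy']
    exact StrongEq.cons _ h

theorem act_irr {n : ℕ} {i : Fin (n-1)} {u : List (Letter n)} (h : Irr' u) : Irr' (act i u) := by
  by_cases hy : ∃ y, StrongEq u (.zeta i :: y)
  · obtain ⟨y, hy⟩ := hy
    exact (h.se hy).tail.se (act_pos hy).symm
  · rw [act_neg hy]
    intro A j z hz
    obtain ⟨U, k, V, hu, he, hs⟩ := slide hz
    have hu' : A ++ [.zeta j, .zeta j] ++ z = U ++ .zeta k :: V := by simpa using hu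
    rcases split3 hu' with ⟨A2, rfl, rfl⟩ | ⟨r', r'', hr', rfl, rfl⟩ | ⟨B1, rfl, rfl⟩
    · exact h (U ++ A2) j z (by simpa using he.symm)
    · rcases r' with _ | ⟨a, _ | ⟨b, r'⟩⟩
      · simp at hr'
        obtain ⟨rfl, rfl⟩ := hr'
        apply hy
        refine ⟨A ++ z, he.symm.trans ?_⟩
        have := StrongEq.right z hs.symm
        simpa using this
      · simp at hr'
        obtain ⟨rfl, rfl, rfl⟩ := hr'
        apply hy
        refine ⟨A ++ z, he.symm.trans ?_⟩
        have := StrongEq.right z (cancel_right (y := .zeta i :: A) [.zeta j] hs).symm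
        simpa using this
      · simp at hr'
    · exact h A j (B1 ++ V) (by simpa using he.symm)

theorem irr_tau {n : ℕ} {i : Fin (n-1)} {u : List (Letter n)} (h : Irr' u) :
    Irr' (.tau i :: u) := by
  refine Irr'.tail (g := .tau i) (h.se (StrongEq.tt i u).symm)

noncomputable def NF {n : ℕ} : List (Letter n) → List (Letter n)
  | [] => []
  | .zeta i :: w => act i (NF w)
  | .tau i :: w => .tau i :: NF w

theorem nf_irr {n : ℕ} (w : List (Letter n)) : Irr' (NF w) := by
  induction w with
  | nil =>
    intro A i y h
    have := (noBig_se h).1 (by intro e; simp [NF, tr])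
    exact not_noBig _ _ _ this
  | cons g w ih =>
    cases g with
    | zeta i => exact act_irr ih
    | tau i => exact irr_tau ih

theorem nf_ctx {n : ℕ} (A : List (Letter n)) {x y : List (Letter n)}
    (h : StrongEq (NF x) (NF y)) : StrongEq (NF (A ++ x)) (NF (A ++ y)) := by
  induction A with
  | nil => exact h
  | cons g A ih =>
    cases g with
    | zeta i => exact act_congr ih
    | tau i => exact StrongEq.cons _ ih

theorem nf_self {n : ℕ} (w : List (Letter n)) (h : Irr' w) : StrongEq (NF w) w := by
  induction w with
  | nil => exact StrongEq.refl _
  | cons g w ih =>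
    have ih := ih h.tail
    cases g with
    | tau i => exact StrongEq.cons _ ih
    | zeta i =>
      refine (act_congr ih).trans ?_
      rw [act_neg]
      · exact StrongEq.refl _
      · rintro ⟨y, hy⟩
        exact h [] i y (StrongEq.cons _ hy)

theorem nf_dz {n : ℕ} (w : List (Letter n)) : ∃ s, DZ s w ∧ StrongEq s (NF w) := by
  induction w with
  | nil => exact ⟨[], .nil, StrongEq.refl _⟩
  | cons g w ih =>
    obtain ⟨s, hs, he⟩ := ih
    cases g with
    | tau i => exact ⟨_, .keep _ hs, StrongEq.cons _ he⟩
    | zeta i =>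
      by_cases hy : ∃ y, StrongEq (NF w) (.zeta i :: y)
      · obtain ⟨y, hy⟩ := hy
        obtain ⟨s', hs', e'⟩ := DZ.transport (he.trans hy).symm (.del i (DZ.refl y))
        exact ⟨s', .del i (hs'.trans hs), e'.symm.trans (act_pos hy).symm⟩
      · refine ⟨_, .keep _ hs, ?_⟩
        rw [NF, act_neg hy]
        exact StrongEq.cons _ he

theorem act_conj {n : ℕ} {i j : Fin (n-1)} (T T' : List (Letter n))
    (h1 : StrongEq (T ++ T') []) (h2 : StrongEq (T' ++ T) [])
    (h : StrongEq (T ++ [.zeta i]) (.zeta j :: T)) (u : List (Letter n)) :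
    StrongEq (T ++ act i u) (act j (T ++ u)) := by
  have ext : ∀ y, StrongEq (T ++ .zeta i :: y) (.zeta j :: (T ++ y)) := by
    intro y
    have := StrongEq.right y h
    simpa using this
  by_cases hy : ∃ y, StrongEq u (.zeta i :: y)
  · obtain ⟨y, hy⟩ := hy
    have h3 := (StrongEq.left T hy).trans (ext y)
    exact (StrongEq.left T (act_pos hy)).trans (act_pos h3).symm
  · rw [act_neg hy, act_neg]
    · exact ext u
    · rintro ⟨y, h'⟩
      apply hy
      refine ⟨T' ++ y, cancel_left T (h'.trans ?_)⟩
      refine StrongEq.trans ?_ (ext _).symm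
      have := StrongEq.cons (.zeta j) (StrongEq.right y h1.symm)
      simpa using this

theorem far_div {n : ℕ} {i j : Fin (n-1)} (hd : 2 ≤ Nat.dist i j) {y z : List (Letter n)}
    (h : StrongEq (.zeta i :: y) (.zeta j :: z)) :
    ∃ x, StrongEq y (.zeta j :: x) ∧ StrongEq z (.zeta i :: x) := by
  obtain ⟨U, k, V, hu, he, hs⟩ := slide h
  cases U with
  | nil =>
    exfalso
    simp only [List.nil_append, List.cons.injEq, Letter.zeta.injEq] at hu
    have := (tr_mem hs (ePair i)).1 (by simp [tr])
    simp [tr] at this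
    have := ePair_inj this
    rw [this, hu.1] at hd
    simp at hd
  | cons g U =>
    simp only [List.cons_append, List.cons.injEq] at hu
    obtain ⟨rfl, rfl⟩ := hu
    refine ⟨U ++ V, he.symm, ?_⟩
    have h1 : StrongEq (.zeta i :: .zeta j :: U) (.zeta j :: .zeta i :: U) :=
      StrongEq.right U (StrongEq.rel (.far_zz i j hd))
    have h2 := zeta_cancel (h1.symm.trans hs)
    have := StrongEq.right V h2.symm
    simpa using this

theorem far_swap {n : ℕ} {i j : Fin (n-1)} (hd : 2 ≤ Nat.dist i j) (u : List (Letter n)) :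
    StrongEq (.zeta i :: .zeta j :: u) (.zeta j :: .zeta i :: u) :=
  StrongEq.right u (StrongEq.rel (.far_zz i j hd))

theorem act_far_aux {n : ℕ} {i j : Fin (n-1)} (hd : 2 ≤ Nat.dist i j) {u y : List (Letter n)}
    (h : StrongEq u (.zeta i :: y)) : StrongEq (act i (act j u)) (act j (act i u)) := by
  by_cases hz : ∃ z, StrongEq u (.zeta j :: z)
  · obtain ⟨z, hz⟩ := hz
    obtain ⟨x, hx1, hx2⟩ := far_div hd (h.symm.trans hz)
    have h1 := act_pos ((act_pos hz).trans hx2)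
    have h2 := act_pos ((act_pos h).trans hx1)
    exact h1.trans h2.symm
  · have hy : ¬ ∃ x, StrongEq y (.zeta j :: x) := by
      rintro ⟨x, hx⟩
      exact hz ⟨_, h.trans ((StrongEq.cons _ hx).trans (far_swap hd x))⟩
    rw [act_neg hz]
    have h1 : StrongEq (act i (.zeta j :: u)) (.zeta j :: y) :=
      act_pos ((StrongEq.cons _ h).trans (far_swap hd y).symm)
    have h2 := act_congr (i := j) (act_pos h)
    rw [act_neg hy] at h2
    exact h1.trans h2.symm

theorem act_far {n : ℕ} {i j : Fin (n-1)} (hd : 2 ≤ Nat.dist i j) (u : List (Letter n)) :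
    StrongEq (act i (act j u)) (act j (act i u)) := by
  by_cases hy : ∃ y, StrongEq u (.zeta i :: y)
  · obtain ⟨y, hy⟩ := hy
    exact act_far_aux hd hy
  by_cases hz : ∃ y, StrongEq u (.zeta j :: y)
  · obtain ⟨y, hz⟩ := hz
    exact (act_far_aux (far_symm hd) hz).symm
  rw [act_neg hy, act_neg hz, act_neg, act_neg]
  · exact far_swap hd u
  · rintro ⟨y, h⟩
    obtain ⟨x, hx, _⟩ := far_div hd h
    exact hz ⟨x, hx⟩
  · rintro ⟨y, h⟩
    obtain ⟨x, hx, _⟩ := far_div (far_symm hd) h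
    exact hy ⟨x, hx⟩

theorem act_act {n : ℕ} {i : Fin (n-1)} {u : List (Letter n)} (h : Irr' u) :
    StrongEq (act i (act i u)) u := by
  by_cases hy : ∃ y, StrongEq u (.zeta i :: y)
  · obtain ⟨y, hy⟩ := hy
    refine (act_congr (act_pos hy)).trans ?_
    rw [act_neg]
    · exact hy.symm
    · rintro ⟨z, hz⟩
      exact h [] i z (hy.trans (StrongEq.cons _ hz))
  · rw [act_neg hy]
    exact act_pos (StrongEq.refl _)

theorem nf_rel {n : ℕ} {r1 r2 : List (Letter n)} (h : RelF n r1 r2) (B : List (Letter n)) :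
    StrongEq (NF (r1 ++ B)) (NF (r2 ++ B)) := by
  have tau_inv : ∀ i : Fin (n-1), StrongEq (n := n) ([.tau i] ++ [.tau i]) [] :=
    fun i => StrongEq.rel (.tt i)
  cases h with
  | zz i => exact act_act (nf_irr B)
  | strong h =>
    cases h with
    | tt i => exact StrongEq.tt i _
    | virt i =>
      exact (act_conj [.tau i] [.tau i] (tau_inv i) (tau_inv i)
        (StrongEq.rel (.virt i)).symm (NF B)).symm
    | far_zz i j h => exact act_far h _
    | far_zt i j h =>
      exact (act_conj [.tau j] [.tau j] (tau_inv j) (tau_inv j)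
        (StrongEq.rel (.far_zt i j h)).symm (NF B)).symm
    | far_tt i j h => exact StrongEq.right (NF B) (StrongEq.rel (.far_tt i j h))
    | r3v i j h => exact StrongEq.right (NF B) (StrongEq.rel (.r3v i j h))
    | semi i j h =>
      refine act_conj [.tau i, .tau j] [.tau j, .tau i] ?_ ?_
        (StrongEq.rel (.semi i j h)) (NF B)
      · exact (StrongEq.cons (.tau i) (StrongEq.tt j [.tau i])).trans (StrongEq.tt i [])
      · exact (StrongEq.cons (.tau j) (StrongEq.tt i [.tau j])).trans (StrongEq.tt j [])

theorem nf_eqF {n : ℕ} {a b : List (Letter n)} (h : EqF a b) : StrongEq (NF a) (NF b) := by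
  have := eqv_iff (p := fun x => StrongEq (NF a) (NF x)) ?_ h
  · exact this.1 (StrongEq.refl _)
  · rintro x y ⟨A, B, r1, r2, h, rfl, rfl⟩
    have e : StrongEq (NF (A ++ r1 ++ B)) (NF (A ++ r2 ++ B)) := by
      rw [List.append_assoc, List.append_assoc]
      exact nf_ctx A (nf_rel h B)
    exact ⟨fun h => h.trans e, fun h => h.trans e.symm⟩

theorem irr_of_irreducible {n : ℕ} {w : List (Letter n)} (h : Irreducible w) : Irr' w :=
  fun A i y h' => not_noBig A i y ((noBig_se h').1 (irr_noBig w h))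

/-! ## The bracket -/

def dHead {n : ℕ} (g : Letter n) (b : ZMod 2) : List (Letter n) :=
  match g with
  | .zeta i => if b = 0 then [] else [.zeta i]
  | .tau i => [.tau i]

theorem deleteEven_nil {n : ℕ} (par : ℕ → ZMod 2) : deleteEven ([] : List (Letter n)) par = [] := rfl

theorem deleteEven_cons {n : ℕ} (g : Letter n) (w : List (Letter n)) (par : ℕ → ZMod 2) :
    deleteEven (g :: w) par = dHead g (par 0) ++ deleteEven w (fun j => par (j + 1)) := by
  have e : deleteEven w (fun j => par (j + 1)) = (List.range w.length).filterMap
      ((fun j => ((g :: w)[j]?).bind fun g =>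
      match g with
      | .zeta i => if par j = 0 then none else some (.zeta i)
      | .tau i => some (.tau i)) ∘ Nat.succ) := by
    unfold deleteEven
    congr 1
  rw [e, ← List.filterMap_map]
  unfold deleteEven
  rw [List.length_cons, List.range_succ_eq_map, List.filterMap_cons]
  cases g with
  | tau i => simp [dHead] <;> rfl
  | zeta i => by_cases h : par 0 = 0 <;> simp [dHead, h] <;> rfl

theorem deleteEven_append {n : ℕ} (A B : List (Letter n)) (par : ℕ → ZMod 2) :
    deleteEven (A ++ B) par = deleteEven A par ++ deleteEven B (fun j => par (A.length + j)) := by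
  induction A generalizing par with
  | nil => simp [deleteEven_nil]
  | cons g A ih =>
    rw [List.cons_append, deleteEven_cons, deleteEven_cons, ih, List.append_assoc]
    simp only [List.length_cons]
    congr 3
    funext j
    congr 1
    omega

theorem deleteEven_congr {n : ℕ} (A : List (Letter n)) (par par' : ℕ → ZMod 2)
    (h : ∀ j < A.length, par j = par' j) : deleteEven A par = deleteEven A par' := by
  induction A generalizing par par' with
  | nil => rfl
  | cons g A ih =>
    rw [deleteEven_cons, deleteEven_cons, h 0 (by simp), ih _ (fun j => par' (j+1))]
    intro j hj
    exact h (j+1) (by simpa using hj)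

theorem deleteEven_sublist {n : ℕ} (A : List (Letter n)) (par : ℕ → ZMod 2) :
    (deleteEven A par).Sublist A := by
  induction A generalizing par with
  | nil => exact List.Sublist.refl _
  | cons g A ih =>
    rw [deleteEven_cons]
    refine List.Sublist.append (l₂ := [g]) ?_ (ih _)
    cases g with
    | tau i => exact List.Sublist.refl _
    | zeta i =>
      simp only [dHead]
      split_ifs <;> simp

theorem deleteEven_odd {n : ℕ} (A : List (Letter n)) (par : ℕ → ZMod 2)
    (h : ∀ j (i : Fin (n-1)), A[j]? = some (Letter.zeta i) → par j = 1) :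
    deleteEven A par = A := by
  induction A generalizing par with
  | nil => rfl
  | cons g A ih =>
    rw [deleteEven_cons, ih]
    · cases g with
      | tau i => rfl
      | zeta i => simp [dHead, h 0 i rfl]
    · intro j i hj
      exact h (j+1) i (by simpa using hj)

theorem zmod2 (x : ZMod 2) : x = 0 ∨ x = 1 := by
  revert x; decide

theorem bracket_local {n : ℕ} {C : List (Letter n) → Prop}
    {P : List (Letter n) → ℕ → ZMod 2} (hP : IsParity C P) (A B r1 r2 : List (Letter n))
    (h : RelFB n r1 r2) (h1 : C (A ++ r1 ++ B)) (h2 : C (A ++ r2 ++ B)) :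
    EqF (deleteEven r1 (fun j => P (A ++ r1 ++ B) (A.length + j)))
      (deleteEven r2 (fun j => P (A ++ r2 ++ B) (A.length + j))) := by
  have rl : ∀ {a b : List (Letter n)}, RelF n a b → EqF a b := fun h =>
    Relation.EqvGen.rel _ _ ⟨[], [], _, _, h, by simp, by simp⟩
  have rf : ∀ a : List (Letter n), EqF a a := fun a => Relation.EqvGen.refl a
  have h0 := h
  cases h with
  | r3c i j hij =>
    obtain ⟨c1, c2, c3⟩ := hP.r3_corr A B i j hij h1 h2
    have c4 := hP.r3_even A B i j hij h1 h2
    simp only [deleteEven_cons, deleteEven_nil, List.append_nil, dHead, Nat.add_zero, Nat.zero_add,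
      ← c1, ← c2, ← c3, Nat.reduceAdd]
    have zz : ∀ i : Fin (n-1), EqF (n := n) [.zeta i, .zeta i] [] := fun i => rl (.zz i)
    rcases zmod2 (P (A ++ [.zeta i, .zeta j, .zeta i] ++ B) A.length) with e1 | e1 <;>
    rcases zmod2 (P (A ++ [.zeta i, .zeta j, .zeta i] ++ B) (A.length + 1)) with e2 | e2 <;>
    rcases zmod2 (P (A ++ [.zeta i, .zeta j, .zeta i] ++ B) (A.length + 2)) with e3 | e3 <;>
    rw [e1, e2, e3] at c4 <;>
    simp only [e1, e2, e3, if_true, one_ne_zero, if_false, List.nil_append, List.cons_append] <;>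
    first
    | (exfalso; revert c4; decide)
    | exact rf _
    | exact Relation.EqvGen.trans _ _ _ (zz i) (Relation.EqvGen.symm _ _ (zz j))
  | ofF h =>
    cases h with
    | zz i =>
      have c := hP.r2c A B i h1 (by simpa using h2)
      simp only [deleteEven_cons, deleteEven_nil, List.append_nil, dHead, Nat.add_zero,
        Nat.zero_add, ← c]
      split_ifs
      · exact rf _
      · exact rl (.zz i)
    | strong h =>
      have hr := rl (.strong h)
      cases h with
      | tt i => exact hr
      | far_tt i j h => exact hr
      | r3v i j h => exact hr
      | virt i =>
        obtain ⟨c1, c2⟩ := hP.comm A B _ _ h0 h1 h2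
        simp only [deleteEven_cons, deleteEven_nil, List.append_nil, dHead, Nat.add_zero,
          Nat.zero_add, ← c1]
        split_ifs
        · exact rf _
        · exact hr
      | far_zt i j h =>
        obtain ⟨c1, c2⟩ := hP.comm A B _ _ h0 h1 h2
        simp only [deleteEven_cons, deleteEven_nil, List.append_nil, dHead, Nat.add_zero,
          Nat.zero_add, ← c1]
        split_ifs
        · exact rf _
        · exact hr
      | far_zz i j h =>
        obtain ⟨c1, c2⟩ := hP.comm A B _ _ h0 h1 h2
        simp only [deleteEven_cons, deleteEven_nil, List.append_nil, dHead, Nat.add_zero,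
          Nat.zero_add, ← c1, ← c2]
        split_ifs
        · exact rf _
        · exact rf _
        · exact rf _
        · exact hr
      | semi i j h =>
        have c := hP.semiv A B i j h h1 h2
        simp only [deleteEven_cons, deleteEven_nil, List.append_nil, dHead, Nat.add_zero,
          Nat.zero_add, Nat.reduceAdd, ← c]
        split_ifs
        · exact rf _
        · exact hr

theorem bracket_step {n : ℕ} {C : List (Letter n) → Prop}
    {P : List (Letter n) → ℕ → ZMod 2} (hP : IsParity C P) {w1 w2 : List (Letter n)}
    (h : StepOf (RelFB n) w1 w2) (h1 : C w1) (h2 : C w2) :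
    EqF (bracket P w1) (bracket P w2) := by
  obtain ⟨A, B, r1, r2, h, rfl, rfl⟩ := h
  have hl := bracket_local hP A B r1 r2 h h1 h2
  unfold bracket
  rw [deleteEven_append (A ++ r1), deleteEven_append A, deleteEven_append (A ++ r2),
    deleteEven_append A]
  rw [deleteEven_congr A (P (A ++ r1 ++ B)) (P (A ++ r2 ++ B))
    (hP.untouched_left A B r1 r2 h h1 h2)]
  rw [deleteEven_congr B (fun j => P (A ++ r1 ++ B) ((A ++ r1).length + j))
    (fun j => P (A ++ r2 ++ B) ((A ++ r2).length + j)) (by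
      intro j hj
      simpa only [List.length_append] using hP.untouched_right A B r1 r2 h h1 h2 j hj)]
  exact eqv_ctx _ _ hl

theorem bracket_eqFB {n : ℕ} {C : List (Letter n) → Prop}
    {P : List (Letter n) → ℕ → ZMod 2}
    (hC : ∀ w1 w2, StepOf (RelFB n) w1 w2 → (C w1 ↔ C w2)) (hP : IsParity C P)
    {w w' : List (Letter n)} (hw : C w) (h : EqFB w w') :
    EqF (bracket P w) (bracket P w') := by
  have := eqv_iff (p := fun x => C x ∧ EqF (bracket P w) (bracket P x)) ?_ h
  · exact (this.1 ⟨hw, Relation.EqvGen.refl _⟩).2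
  · intro a b hab
    have hc := hC a b hab
    constructor
    · rintro ⟨ha, he⟩
      exact ⟨hc.1 ha, Relation.EqvGen.trans _ _ _ he (bracket_step hP hab ha (hc.1 ha))⟩
    · rintro ⟨hb, he⟩
      exact ⟨hc.2 hb, Relation.EqvGen.trans _ _ _ he
        (Relation.EqvGen.symm _ _ (bracket_step hP hab (hc.2 hb) hb))⟩

/-- main theorem: if all classical crossings of `β` are odd with
respect to a parity `p` and `β` admits no bigon reduction, then every braid word `β'`
equal to `β` in `FB_n` contains a subword strongly equivalent to `β`. -/
theorem odd_irreducible_reproduces (n : ℕ) (C : List (Letter n) → Prop)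
    (P : List (Letter n) → ℕ → ZMod 2)
    (hC : ∀ w1 w2, StepOf (RelFB n) w1 w2 → (C w1 ↔ C w2))
    (hP : IsParity C P)
    (w : List (Letter n)) (hw : C w)
    (hodd : ∀ j (i : Fin (n-1)), w[j]? = some (Letter.zeta i) → P w j = 1)
    (hirr : Irreducible w) :
    ∀ w' : List (Letter n), EqFB w w' →
      ∃ s : List (Letter n), s.Sublist w' ∧ StrongEq s w := by
  intro w' h
  have h1 := nf_eqF (bracket_eqFB hC hP hw h)
  have h2 : bracket P w = w := deleteEven_odd w (P w) hodd
  rw [h2] at h1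
  obtain ⟨s, hs, he⟩ := nf_dz (bracket P w')
  refine ⟨s, hs.sublist.trans (deleteEven_sublist _ _), ?_⟩
  exact he.trans (h1.symm.trans (nf_self w (irr_of_irreducible hirr)))

end OneTermBracket
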